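/- arXiv:2106.15362 — 2 statements merged into one kernel-verified Lean document; each statement's English description precedes it below -/
import Mathlib

section
/- For a simple graph G on n vertices with p-Sombor matrix S_p(G) (p ≠ 0 a real number), the fourth spectral moment satisfies N_4 = tr((S_p(G))^4) = ∑_{i=1}^n ( ∑_{j : v_j ∼ v_i} ((d_i)^p + (d_j)^p)^{2/p} )^2 + ∑_{i ≠ j} ( ∑_{k : v_k ∼ v_i and v_k ∼ v_j} ((d_i)^p + (d_k)^p)^{1/p} ((d_j)^p + (d_k)^p)^{1/p} )^2. -/
open Finset

/-- The `p`-Sombor matrix of a simple graph `G` on vertices `{0, …, n-1}`: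
its `(i,j)` entry is `((d i)^p + (d j)^p)^(1/p)` when `i ~ j`, and `0` otherwise. -/
noncomputable def somborMatrix (n : ℕ) (G : SimpleGraph (Fin n)) [DecidableRel G.Adj]
    (p : ℝ) : Matrix (Fin n) (Fin n) ℝ :=
  Matrix.of fun i j =>
    if G.Adj i j then ((G.degree i : ℝ) ^ p + (G.degree j : ℝ) ^ p) ^ (1 / p) else 0

/-- Sum of a symmetric weight `f` over the edges of `G`
(each unordered edge counted once). -/
noncomputable def edgeSum (n : ℕ) (G : SimpleGraph (Fin n)) [DecidableRel G.Adj]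
    (f : Fin n → Fin n → ℝ) : ℝ :=
  (1 / 2) * ∑ i, ∑ j, if G.Adj i j then f i j else 0

/-- The `p`-Sombor index `SO_p(G) = ∑_{ij ∈ E(G)} ((d i)^p + (d j)^p)^(1/p)`. -/
noncomputable def somborIndex (n : ℕ) (G : SimpleGraph (Fin n)) [DecidableRel G.Adj]
    (p : ℝ) : ℝ :=
  edgeSum n G fun i j => ((G.degree i : ℝ) ^ p + (G.degree j : ℝ) ^ p) ^ (1 / p)

/-- The fourth spectral moment of the `p`-Sombor matrix:
`N₄ = tr((S_p(G))⁴) = ∑_i ( ∑_{j ∼ i} ((d_i)^p + (d_j)^p)^(2/p) )² +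
  ∑_{i ≠ j} ( ∑_{k ∼ i, k ∼ j} ((d_i)^p + (d_k)^p)^(1/p) ((d_j)^p + (d_k)^p)^(1/p) )²`. -/
theorem somborMatrix_trace_fourth (n : ℕ) (G : SimpleGraph (Fin n)) [DecidableRel G.Adj]
    (hdeg : ∀ i : Fin n, 0 < G.degree i) (p : ℝ) (hp : p ≠ 0) :
    Matrix.trace (somborMatrix n G p ^ 4) =
      (∑ i, (∑ j, if G.Adj i j then
          ((G.degree i : ℝ) ^ p + (G.degree j : ℝ) ^ p) ^ (2 / p) else 0) ^ 2) +
      ∑ i, ∑ j, if i ≠ j then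
          (∑ k, if G.Adj k i ∧ G.Adj k j then
              ((G.degree i : ℝ) ^ p + (G.degree k : ℝ) ^ p) ^ (1 / p) *
                ((G.degree j : ℝ) ^ p + (G.degree k : ℝ) ^ p) ^ (1 / p)
            else 0) ^ 2
        else 0 := by
  have hM : ∀ i j, (somborMatrix n G p ^ 2) i j =
      ∑ k, if G.Adj k i ∧ G.Adj k j then
              ((G.degree i : ℝ) ^ p + (G.degree k : ℝ) ^ p) ^ (1 / p) *
                ((G.degree j : ℝ) ^ p + (G.degree k : ℝ) ^ p) ^ (1 / p)
            else 0 := by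
    intro i j
    rw [pow_two, Matrix.mul_apply]
    refine Finset.sum_congr rfl fun k _ => ?_
    simp only [somborMatrix, Matrix.of_apply]
    simp only [G.adj_comm i k]
    rw [add_comm ((G.degree k : ℝ) ^ p) ((G.degree j : ℝ) ^ p)]
    by_cases h1 : G.Adj k i <;> by_cases h2 : G.Adj k j <;> simp [h1, h2]
  have hsymm : ∀ i j, (somborMatrix n G p ^ 2) j i = (somborMatrix n G p ^ 2) i j := by
    intro i j
    rw [hM, hM]
    refine Finset.sum_congr rfl fun k _ => ?_
    rw [mul_comm]
    by_cases h1 : G.Adj k i <;> by_cases h2 : G.Adj k j <;> simp [h1, h2]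
  have hdiag : ∀ i, (somborMatrix n G p ^ 2) i i = ∑ j, if G.Adj i j then
          ((G.degree i : ℝ) ^ p + (G.degree j : ℝ) ^ p) ^ (2 / p) else 0 := by
    intro i
    rw [hM]
    refine Finset.sum_congr rfl fun k _ => ?_
    simp only [and_self, G.adj_comm k i]
    have hpos : 0 < (G.degree i : ℝ) ^ p + (G.degree k : ℝ) ^ p := by
      have h1 : (0 : ℝ) < G.degree i := by exact_mod_cast hdeg i
      have h2 : (0 : ℝ) < G.degree k := by exact_mod_cast hdeg k
      positivity
    rw [← Real.rpow_add hpos, ← add_div, one_add_one_eq_two]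
  have htr : Matrix.trace (somborMatrix n G p ^ 4) =
      ∑ i, ∑ j, ((somborMatrix n G p ^ 2) i j) ^ 2 := by
    rw [show (4 : ℕ) = 2 + 2 from rfl, pow_add, Matrix.trace]
    refine Finset.sum_congr rfl fun i _ => ?_
    rw [Matrix.diag_apply, Matrix.mul_apply]
    refine Finset.sum_congr rfl fun j _ => ?_
    rw [hsymm i j, pow_two ((somborMatrix n G p ^ 2) i j)]
  simp only [← hdiag, ← hM]
  rw [htr, ← Finset.sum_add_distrib]
  refine Finset.sum_congr rfl fun i _ => ?_
  have hsplit : ∀ j, ((somborMatrix n G p ^ 2) i j) ^ 2 =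
      (if i = j then ((somborMatrix n G p ^ 2) i j) ^ 2 else 0) +
      (if i ≠ j then ((somborMatrix n G p ^ 2) i j) ^ 2 else 0) := by
    intro j
    by_cases h : i = j <;> simp [h]
  rw [Finset.sum_congr rfl fun j _ => hsplit j, Finset.sum_add_distrib]
  simp
end

section
/- Let G be a connected bipartite simple graph on n ≥ 2 vertices with bipartition (X_1, X_2), |X_1| = n_1, |X_2| = n_2, n = n_1 + n_2, and let p ≠ 0 be a real number. If η_max and η_2nd-min denote the largest eigenvalue and the second smallest eigenvalue of the p-Sombor Laplacian matrix L_p(G), then (n_1 n_2 / n) η_2nd-min ≤ SO_p(G) ≤ (n_1 n_2 / n) η_max. -/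
open Finset

/-- The `p`-Sombor Laplacian matrix `L_p(G) = D_p(G) − S_p(G)`, where `D_p(G)` is the
diagonal matrix of the row sums of `S_p(G)`. -/
noncomputable def somborLaplacian (n : ℕ) (G : SimpleGraph (Fin n)) [DecidableRel G.Adj]
    (p : ℝ) : Matrix (Fin n) (Fin n) ℝ :=
  Matrix.diagonal (fun i => ∑ k, somborMatrix n G p i k) - somborMatrix n G p

lemma sombor_spec {n : ℕ} {A : Matrix (Fin n) (Fin n) ℝ} (hA : A.IsHermitian)
    (u v : Fin n → ℝ) :
    u ⬝ᵥ v = ∑ k, ((hA.eigenvectorBasis k : Fin n → ℝ) ⬝ᵥ u) *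
      ((hA.eigenvectorBasis k : Fin n → ℝ) ⬝ᵥ v) := by
  have h := hA.eigenvectorBasis.sum_inner_mul_inner (WithLp.toLp 2 u) (WithLp.toLp 2 v)
  simp only [EuclideanSpace.inner_eq_star_dotProduct, star_trivial] at h
  rw [dotProduct_comm, ← h]
  refine Finset.sum_congr rfl fun k _ => ?_
  rw [dotProduct_comm v]

lemma sombor_eig {n : ℕ} {A : Matrix (Fin n) (Fin n) ℝ} (hA : A.IsHermitian)
    (u : Fin n → ℝ) (k : Fin n) :
    (hA.eigenvectorBasis k : Fin n → ℝ) ⬝ᵥ (A.mulVec u) =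
      hA.eigenvalues k * ((hA.eigenvectorBasis k : Fin n → ℝ) ⬝ᵥ u) := by
  have ht : A.transpose = A := by
    have := hA.eq
    rwa [Matrix.conjTranspose_eq_transpose_of_trivial] at this
  rw [Matrix.dotProduct_mulVec, ← Matrix.mulVec_transpose, ht, hA.mulVec_eigenvectorBasis,
    smul_dotProduct, smul_eq_mul]

lemma sombor_mulVec (n : ℕ) (G : SimpleGraph (Fin n)) [DecidableRel G.Adj] (p : ℝ)
    (x : Fin n → ℝ) (i : Fin n) :
    (somborLaplacian n G p).mulVec x i = ∑ j, somborMatrix n G p i j * (x i - x j) := by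
  rw [somborLaplacian, Matrix.sub_mulVec, Pi.sub_apply, Matrix.mulVec_diagonal]
  simp only [Matrix.mulVec, dotProduct, mul_sub, Finset.sum_sub_distrib, Finset.sum_mul]

lemma somborMatrix_symm (n : ℕ) (G : SimpleGraph (Fin n)) [DecidableRel G.Adj] (p : ℝ)
    (i j : Fin n) : somborMatrix n G p i j = somborMatrix n G p j i := by
  simp only [somborMatrix, Matrix.of_apply, G.adj_comm i j, add_comm]

lemma somborMatrix_nonneg (n : ℕ) (G : SimpleGraph (Fin n)) [DecidableRel G.Adj] (p : ℝ)
    (i j : Fin n) : 0 ≤ somborMatrix n G p i j := by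
  simp only [somborMatrix, Matrix.of_apply]
  split_ifs <;> positivity

lemma somborIndex_eq (n : ℕ) (G : SimpleGraph (Fin n)) [DecidableRel G.Adj] (p : ℝ) :
    somborIndex n G p = (1 / 2) * ∑ i, ∑ j, somborMatrix n G p i j := rfl

lemma sombor_quad (n : ℕ) (G : SimpleGraph (Fin n)) [DecidableRel G.Adj] (p : ℝ)
    (x : Fin n → ℝ) :
    x ⬝ᵥ (somborLaplacian n G p).mulVec x =
      (1 / 2) * ∑ i, ∑ j, somborMatrix n G p i j * (x i - x j) ^ 2 := by
  have h1 : x ⬝ᵥ (somborLaplacian n G p).mulVec x =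
      ∑ i, ∑ j, somborMatrix n G p i j * (x i * (x i - x j)) := by
    simp only [dotProduct, sombor_mulVec, Finset.mul_sum]
    refine Finset.sum_congr rfl fun i _ => Finset.sum_congr rfl fun j _ => by ring
  have h2 : x ⬝ᵥ (somborLaplacian n G p).mulVec x =
      ∑ i, ∑ j, somborMatrix n G p i j * (x j * (x j - x i)) := by
    rw [h1, Finset.sum_comm]
    refine Finset.sum_congr rfl fun i _ => Finset.sum_congr rfl fun j _ => ?_
    rw [somborMatrix_symm]
  have h3 : ∑ i, ∑ j, somborMatrix n G p i j * (x i - x j) ^ 2 =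
      ∑ i, ∑ j, somborMatrix n G p i j * (x i * (x i - x j)) +
      ∑ i, ∑ j, somborMatrix n G p i j * (x j * (x j - x i)) := by
    simp only [← Finset.sum_add_distrib]
    refine Finset.sum_congr rfl fun i _ => Finset.sum_congr rfl fun j _ => by ring
  rw [h3, ← h1, ← h2]; ring

/-- For a connected bipartite graph on `n ≥ 2` vertices with bipartition
`(X, Xᶜ)`, `n₁ = |X|`, `n₂ = |Xᶜ|`, listing the `p`-Sombor Laplacian eigenvalues in
nondecreasing order via a permutation `σ`:
`(n₁ n₂ / n) η_2nd-min ≤ SO_p(G) ≤ (n₁ n₂ / n) η_max`. -/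
theorem somborIndex_bipartite_laplacian_bounds (n : ℕ) (hn : 2 ≤ n)
    (G : SimpleGraph (Fin n)) [DecidableRel G.Adj] (hconn : G.Connected)
    (X : Finset (Fin n)) (hbip : ∀ u v, G.Adj u v → (u ∈ X ↔ v ∉ X))
    (p : ℝ) (hp : p ≠ 0) (hH : (somborLaplacian n G p).IsHermitian)
    (σ : Equiv.Perm (Fin n)) (hmono : Monotone (fun i => hH.eigenvalues (σ i))) :
    ((X.card : ℝ) * (Xᶜ.card : ℝ) / (n : ℝ)) * hH.eigenvalues (σ ⟨1, by omega⟩) ≤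
        somborIndex n G p ∧
      somborIndex n G p ≤
        ((X.card : ℝ) * (Xᶜ.card : ℝ) / (n : ℝ)) * hH.eigenvalues (σ ⟨n - 1, by omega⟩) := by
  have hn0 : (0 : ℝ) < n := by exact_mod_cast (by omega : 0 < n)
  have hcard : (X.card : ℝ) + (Xᶜ.card : ℝ) = n := by
    have := Finset.card_add_card_compl X
    rw [Fintype.card_fin] at this
    exact_mod_cast this
  set a : ℝ := (X.card : ℝ) with ha
  set b : ℝ := (Xᶜ.card : ℝ) with hb
  have ha0 : 0 ≤ a := Nat.cast_nonneg _
  have hb0 : 0 ≤ b := Nat.cast_nonneg _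
  have hSO : 0 ≤ somborIndex n G p := by
    rw [somborIndex_eq]
    have := Finset.sum_nonneg fun i (_ : i ∈ Finset.univ) =>
      Finset.sum_nonneg fun j (_ : j ∈ Finset.univ) => somborMatrix_nonneg n G p i j
    linarith
  let x : Fin n → ℝ := fun i => if i ∈ X then b else -a
  have hsum : ∀ s t : ℝ, ∑ i, (if i ∈ X then s else t) = a * s + b * t := by
    intro s t
    rw [← Finset.sum_add_sum_compl X]
    congr 1
    · rw [Finset.sum_congr rfl (g := fun _ => s) (fun i hi => if_pos hi)]
      simp [ha]
    · rw [Finset.sum_congr rfl (g := fun _ => t) (fun i hi => if_neg (Finset.mem_compl.1 hi))]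
      simp only [Finset.sum_const, nsmul_eq_mul, hb]
  have hx1 : (fun _ => (1 : ℝ)) ⬝ᵥ x = 0 := by
    simp only [dotProduct, one_mul, x, hsum]; ring
  have hxx : x ⬝ᵥ x = n * (a * b) := by
    have : x ⬝ᵥ x = ∑ i, (if i ∈ X then b * b else a * a) := by
      refine Finset.sum_congr rfl fun i _ => ?_
      by_cases hi : i ∈ X <;> simp [x, hi]
    rw [this, hsum, ← hcard]; ring
  have hq : x ⬝ᵥ (somborLaplacian n G p).mulVec x = n ^ 2 * somborIndex n G p := by
    rw [sombor_quad, somborIndex_eq, mul_left_comm]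
    congr 1
    simp only [Finset.mul_sum]
    refine Finset.sum_congr rfl fun i _ => Finset.sum_congr rfl fun j _ => ?_
    by_cases hij : G.Adj i j
    · have hb' := hbip i j hij
      rw [mul_comm]
      congr 1
      by_cases hi : i ∈ X
      · have hj := hb'.1 hi
        simp only [x, hi, hj, if_true, if_false, ← hcard]; ring
      · have hj : j ∈ X := by by_contra h; exact hi (hb'.2 h)
        simp only [x, hi, hj, if_true, if_false, ← hcard]; ring
    · simp [somborMatrix, hij]
  have hquad : (n : ℝ) ^ 2 * somborIndex n G p = ∑ k, hH.eigenvalues k *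
      ((hH.eigenvectorBasis k : Fin n → ℝ) ⬝ᵥ x) ^ 2 := by
    rw [← hq, sombor_spec hH]
    refine Finset.sum_congr rfl fun k _ => ?_
    rw [sombor_eig]; ring
  have hnorm : (n : ℝ) * (a * b) = ∑ k, ((hH.eigenvectorBasis k : Fin n → ℝ) ⬝ᵥ x) ^ 2 := by
    rw [← hxx, sombor_spec hH]
    exact Finset.sum_congr rfl fun k _ => (sq _).symm
  constructor
  · rcases le_or_gt (hH.eigenvalues (σ ⟨1, by omega⟩)) 0 with h | h
    · exact (mul_nonpos_of_nonneg_of_nonpos (by positivity) h).trans hSO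
    have hge : ∀ k, k ≠ σ ⟨0, by omega⟩ →
        hH.eigenvalues (σ ⟨1, by omega⟩) ≤ hH.eigenvalues k := by
      intro k hk
      have h1 : (⟨1, by omega⟩ : Fin n) ≤ σ.symm k := by
        rw [Fin.le_def]
        by_contra hlt
        apply hk
        rw [← Equiv.symm_apply_eq]
        ext
        simp only at hlt ⊢
        omega
      simpa using hmono h1
    have hL1 : (somborLaplacian n G p).mulVec (fun _ => (1 : ℝ)) = 0 := by
      funext i
      rw [sombor_mulVec]; simp
    have hz : ∀ k, k ≠ σ ⟨0, by omega⟩ →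
        (hH.eigenvectorBasis k : Fin n → ℝ) ⬝ᵥ (fun _ => (1 : ℝ)) = 0 := by
      intro k hk
      have h2 := sombor_eig hH (fun _ => (1 : ℝ)) k
      rw [hL1, dotProduct_zero] at h2
      exact (mul_eq_zero.1 h2.symm).resolve_left (h.trans_le (hge k hk)).ne'
    have h11 : (n : ℝ) = ((hH.eigenvectorBasis (σ ⟨0, by omega⟩) : Fin n → ℝ) ⬝ᵥ
        (fun _ => (1 : ℝ))) * ((hH.eigenvectorBasis (σ ⟨0, by omega⟩) : Fin n → ℝ) ⬝ᵥ
        (fun _ => (1 : ℝ))) := by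
      have h3 := sombor_spec hH (fun _ => (1 : ℝ)) (fun _ => (1 : ℝ))
      rw [Finset.sum_eq_single (σ ⟨0, by omega⟩) (fun k _ hk => by rw [hz k hk, zero_mul])
        (by simp)] at h3
      rw [← h3]; simp [dotProduct]
    have hc0 : (hH.eigenvectorBasis (σ ⟨0, by omega⟩) : Fin n → ℝ) ⬝ᵥ x = 0 := by
      have h3 := sombor_spec hH (fun _ => (1 : ℝ)) x
      rw [Finset.sum_eq_single (σ ⟨0, by omega⟩) (fun k _ hk => by rw [hz k hk, zero_mul])
        (by simp), hx1] at h3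
      refine (mul_eq_zero.1 h3.symm).resolve_left fun h0 => ?_
      rw [h0, zero_mul] at h11
      exact hn0.ne' h11
    have key : hH.eigenvalues (σ ⟨1, by omega⟩) * (n * (a * b)) ≤
        (n : ℝ) ^ 2 * somborIndex n G p := by
      rw [hquad, hnorm, Finset.mul_sum]
      refine Finset.sum_le_sum fun k _ => ?_
      by_cases hk : k = σ ⟨0, by omega⟩
      · rw [hk, hc0]; simp
      · exact mul_le_mul_of_nonneg_right (hge k hk) (sq_nonneg _)
    rw [div_mul_eq_mul_div, div_le_iff₀ hn0]
    refine le_of_mul_le_mul_left ?_ hn0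
    linarith
  · have key : (n : ℝ) ^ 2 * somborIndex n G p ≤
        hH.eigenvalues (σ ⟨n - 1, by omega⟩) * (n * (a * b)) := by
      rw [hquad, hnorm, Finset.mul_sum]
      refine Finset.sum_le_sum fun k _ => mul_le_mul_of_nonneg_right ?_ (sq_nonneg _)
      have h1 : σ.symm k ≤ (⟨n - 1, by omega⟩ : Fin n) := by
        rw [Fin.le_def]
        have := (σ.symm k).2
        simp only
        omega
      simpa using hmono h1
    rw [div_mul_eq_mul_div, le_div_iff₀ hn0]
    refine le_of_mul_le_mul_left ?_ hn0
    linarith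
end
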